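/- For every d ≥ 1 and every N-point configuration x_1, …, x_N on the unit sphere S^d ⊂ R^{d+1}, the normalized sum of distances never exceeds the distance integral: (1/N²) ∑_{j=1}^N ∑_{k=1}^N |x_j − x_k| ≤ ∫_{S^d} ∫_{S^d} |x − y| dσ_d(x) dσ_d(y). -/

import Mathlib

open MeasureTheory Metric Real Filter
open scoped BigOperators ENNReal NNReal RealInnerProductSpace Topology

noncomputable section

/-- Normalized uniform (surface) probability measure `σ_d` on the unit sphere
`S^d ⊂ ℝ^{d+1}`, defined as normalized `d`-dimensional Hausdorff measure. -/
def sigmaMeasure (d : ℕ) : Measure (EuclideanSpace ℝ (Fin (d + 1))) :=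
  (μH[(d : ℝ)] (sphere (0 : EuclideanSpace ℝ (Fin (d + 1))) 1))⁻¹ •
    μH[(d : ℝ)].restrict (sphere (0 : EuclideanSpace ℝ (Fin (d + 1))) 1)

/-- Squared spherical cap `L²` discrepancy of the `N`-point configuration `x` on `S^d`:
`∫_{-1}^{1} ∫_{S^d} |#{k : x_k ∈ C(y;t)}/N − σ_d(C(y;t))|² dσ_d(y) dt`. -/
def L2DiscSq (d N : ℕ) (x : Fin N → EuclideanSpace ℝ (Fin (d + 1))) : ℝ :=
  ∫ t in Set.Icc (-1 : ℝ) 1, ∫ y,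
    ((Nat.card {k : Fin N // t ≤ ⟪y, x k⟫} : ℝ) / N
      - (sigmaMeasure d {z | t ≤ ⟪y, z⟫}).toReal) ^ 2 ∂ sigmaMeasure d

/-- Spherical cap `L²` discrepancy. -/
def L2Disc (d N : ℕ) (x : Fin N → EuclideanSpace ℝ (Fin (d + 1))) : ℝ :=
  Real.sqrt (L2DiscSq d N x)


/-- face map -/
def faceMap (d : ℕ) (i : Fin (d + 1)) (s : ℝ) (v : Fin d → ℝ) : EuclideanSpace ℝ (Fin (d + 1)) :=
  WithLp.toLp 2 (Fin.insertNth (α := fun _ => ℝ) i s v)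

lemma faceMap_norm (d : ℕ) (i : Fin (d + 1)) (s : ℝ) (hs : |s| = 1) (v : Fin d → ℝ) :
    1 ≤ ‖faceMap d i s v‖ := by
  have h := PiLp.norm_apply_le (faceMap d i s v) i
  simp only [faceMap, Fin.insertNth_apply_same, Real.norm_eq_abs, hs] at h
  exact h

lemma normalize_lip {E : Type*} [NormedAddCommGroup E] [NormedSpace ℝ E] (x y : E)
    (hx : 1 ≤ ‖x‖) (hy : 1 ≤ ‖y‖) : ‖‖x‖⁻¹ • x - ‖y‖⁻¹ • y‖ ≤ 2 * ‖x - y‖ := by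
  have e : ‖x‖⁻¹ • x - ‖y‖⁻¹ • y = ‖x‖⁻¹ • (x - y) + (‖x‖⁻¹ - ‖y‖⁻¹) • y := by
    rw [smul_sub, sub_smul]; abel
  rw [e]
  refine (norm_add_le _ _).trans ?_
  rw [norm_smul, norm_smul, norm_inv, norm_norm]
  have hx0 : 0 < ‖x‖ := by linarith
  have hy0 : 0 < ‖y‖ := by linarith
  have hi : ‖x‖⁻¹ ≤ 1 := inv_le_one_of_one_le₀ hx
  have h1 : ‖‖x‖⁻¹ - ‖y‖⁻¹‖ * ‖y‖ = ‖x‖⁻¹ * |‖y‖ - ‖x‖| := by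
    rw [inv_sub_inv hx0.ne' hy0.ne', Real.norm_eq_abs, abs_div, abs_of_pos (mul_pos hx0 hy0)]
    field_simp
  rw [h1]
  have h2 : |‖y‖ - ‖x‖| ≤ ‖x - y‖ := by
    rw [abs_sub_comm]; exact abs_norm_sub_norm_le x y
  have h3 := mul_le_mul hi h2 (abs_nonneg _) zero_le_one
  have h4 := mul_le_mul_of_nonneg_right hi (norm_nonneg (x - y))
  linarith

lemma faceMap_lip (d : ℕ) (i : Fin (d + 1)) (s : ℝ) :
    ∃ K, LipschitzWith K (faceMap d i s) := by
  refine ⟨_, (PiLp.lipschitzWith_toLp 2 (fun _ : Fin (d + 1) => ℝ)).comp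
    (LipschitzWith.of_dist_le_mul (K := 1) (f := fun v : Fin d → ℝ =>
      Fin.insertNth (α := fun _ => ℝ) i s v) ?_)⟩
  intro v w
  rw [NNReal.coe_one, one_mul, dist_pi_le_iff dist_nonneg]
  intro j
  refine Fin.succAboveCases i ?_ ?_ j
  · simp
  · intro k
    simpa using dist_le_pi_dist v w k

lemma sphere_ne_top (d : ℕ) :
    μH[(d : ℝ)] (sphere (0 : EuclideanSpace ℝ (Fin (d + 1))) 1) ≠ ∞ := by
  set G : Fin (d + 1) → ℝ → (Fin d → ℝ) → EuclideanSpace ℝ (Fin (d + 1)) :=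
    fun i s v => ‖faceMap d i s v‖⁻¹ • faceMap d i s v with hG
  have key : ∀ i s, |s| = 1 → μH[(d : ℝ)] (G i s '' closedBall 0 1) < ∞ := by
    intro i s hs
    obtain ⟨K, hK⟩ := faceMap_lip d i s
    have hL : LipschitzWith (2 * K) (G i s) := by
      refine LipschitzWith.of_dist_le_mul fun v w => ?_
      have h1 := normalize_lip _ _ (faceMap_norm d i s hs v) (faceMap_norm d i s hs w)
      have h2 := hK.dist_le_mul v w
      rw [dist_eq_norm] at h2 ⊢
      push_cast
      simp only [hG]
      linarith
    refine (hL.hausdorffMeasure_image_le (Nat.cast_nonneg d) _).trans_lt ?_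
    have hv : (μH[(d : ℝ)] : Measure (Fin d → ℝ)) = volume := by
      simpa using hausdorffMeasure_pi_real (ι := Fin d)
    rw [hv]
    refine ENNReal.mul_lt_top (ENNReal.rpow_lt_top_of_nonneg (Nat.cast_nonneg d) ENNReal.coe_ne_top) ?_
    exact (isCompact_closedBall _ _).measure_lt_top
  have hsub : sphere (0 : EuclideanSpace ℝ (Fin (d + 1))) 1 ⊆
      ⋃ i, (G i 1 '' closedBall 0 1 ∪ G i (-1) '' closedBall 0 1) := by
    intro x hx
    have hx1 : ‖x‖ = 1 := by simpa using hx
    obtain ⟨i, -, hi⟩ := Finset.exists_max_image Finset.univ (fun i => |x i|)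
      Finset.univ_nonempty
    have hm : 0 < |x i| := by
      by_contra h
      have h0 : |x i| = 0 := le_antisymm (not_lt.mp h) (abs_nonneg _)
      have : x = 0 := by
        ext j
        have := hi j (Finset.mem_univ _)
        rw [h0] at this
        simpa using this
      rw [this] at hx1
      simp at hx1
    set v : Fin d → ℝ := fun j => x (i.succAbove j) / |x i| with hv
    have hvB : v ∈ closedBall (0 : Fin d → ℝ) 1 := by
      rw [mem_closedBall, dist_zero_right, pi_norm_le_iff_of_nonneg zero_le_one]
      intro j
      rw [hv, Real.norm_eq_abs, abs_div, abs_abs, div_le_one hm]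
      exact hi _ (Finset.mem_univ _)
    have hf : faceMap d i (x i / |x i|) v = |x i|⁻¹ • x := by
      ext j
      refine Fin.succAboveCases i ?_ ?_ j
      · simp [faceMap, div_eq_inv_mul]
      · intro k
        simp [faceMap, hv, div_eq_inv_mul]
    have hGx : G i (x i / |x i|) v = x := by
      simp only [hG, hf, norm_smul, hx1, norm_inv, Real.norm_eq_abs, abs_abs, mul_one, inv_inv]
      rw [smul_smul, mul_inv_cancel₀ hm.ne', one_smul]
    refine Set.mem_iUnion.mpr ⟨i, ?_⟩
    rcases abs_cases (x i) with ⟨h, _⟩ | ⟨h, _⟩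
    · left
      refine ⟨v, hvB, ?_⟩
      rw [← hGx]
      congr 1
      rw [h, div_self]
      rw [← h]; exact hm.ne'
    · right
      refine ⟨v, hvB, ?_⟩
      rw [← hGx]
      congr 1
      rw [h, div_neg, div_self]
      intro h0
      rw [h0] at hm
      simp at hm
  refine ((measure_mono hsub).trans (measure_iUnion_le _)).trans_lt ?_ |>.ne
  rw [tsum_fintype]
  refine ENNReal.sum_lt_top.mpr fun i _ => ?_
  exact (measure_union_le _ _).trans_lt
    (ENNReal.add_lt_top.mpr ⟨key i 1 (by simp), key i (-1) (by simp)⟩)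

lemma sphere_ne_zero (d : ℕ) :
    μH[(d : ℝ)] (sphere (0 : EuclideanSpace ℝ (Fin (d + 1))) 1) ≠ 0 := by
  set P : EuclideanSpace ℝ (Fin (d + 1)) → (Fin d → ℝ) := fun x j => x j.succ with hP
  have hL : LipschitzWith 1 P := by
    refine LipschitzWith.of_dist_le_mul fun x y => ?_
    rw [NNReal.coe_one, one_mul, dist_pi_le_iff dist_nonneg]
    intro j
    have := PiLp.norm_apply_le (x - y) j.succ
    rw [dist_eq_norm, dist_eq_norm]
    exact this
  intro h0
  have h := hL.hausdorffMeasure_image_le (Nat.cast_nonneg d)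
    (sphere (0 : EuclideanSpace ℝ (Fin (d + 1))) 1)
  have hv : (μH[(d : ℝ)] : Measure (Fin d → ℝ)) = volume := by
    simpa using hausdorffMeasure_pi_real (ι := Fin d)
  rw [h0, mul_zero, hv] at h
  have hU : IsOpen {v : Fin d → ℝ | ∑ j, v j ^ 2 < 1} :=
    isOpen_lt (by fun_prop) continuous_const
  have hpos := hU.measure_pos (volume : Measure (Fin d → ℝ)) ⟨0, by simp⟩
  have hsub : {v : Fin d → ℝ | ∑ j, v j ^ 2 < 1} ⊆
      P '' sphere (0 : EuclideanSpace ℝ (Fin (d + 1))) 1 := by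
    intro v hv
    have hv' : ∑ j, v j ^ 2 < 1 := hv
    refine ⟨faceMap d 0 (√(1 - ∑ j, v j ^ 2)) v, ?_, ?_⟩
    · rw [mem_sphere_zero_iff_norm, EuclideanSpace.norm_eq, Fin.sum_univ_succ]
      simp only [faceMap, Fin.insertNth_zero, Fin.cons_zero, Fin.cons_succ, Real.norm_eq_abs,
        sq_abs]
      rw [Real.sq_sqrt (by linarith)]
      simp
    · ext j
      simp [hP, faceMap]
  exact absurd ((hpos.trans_le (measure_mono hsub)).trans_le h) (lt_irrefl _)

instance sigma_prob (d : ℕ) : IsProbabilityMeasure (sigmaMeasure d) := by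
  refine ⟨?_⟩
  simp only [sigmaMeasure, Measure.smul_apply, Measure.restrict_apply_univ, smul_eq_mul]
  exact ENNReal.inv_mul_cancel (sphere_ne_zero d) (sphere_ne_top d)

lemma sigma_ae (d : ℕ) : ∀ᵐ x ∂(sigmaMeasure d), ‖x‖ = 1 := by
  refine Measure.ae_smul_measure ?_ _
  filter_upwards [ae_restrict_mem isClosed_sphere.measurableSet] with x hx
  simpa using hx

lemma sigma_pres (d : ℕ)
    (e : EuclideanSpace ℝ (Fin (d + 1)) ≃ₗᵢ[ℝ] EuclideanSpace ℝ (Fin (d + 1))) :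
    MeasurePreserving e (sigmaMeasure d) (sigmaMeasure d) := by
  have h1 := (e.toIsometryEquiv.measurePreserving_hausdorffMeasure (d : ℝ)).restrict_preimage
    (s := sphere 0 1) isClosed_sphere.measurableSet
  have h2 : e.toIsometryEquiv ⁻¹' (sphere (0 : EuclideanSpace ℝ (Fin (d + 1))) 1) = sphere 0 1 := by
    ext x
    simp
  rw [h2] at h1
  exact h1.smul_measure _

lemma sigma_const (d : ℕ) (f : ℝ → ℝ) (x y : EuclideanSpace ℝ (Fin (d + 1)))
    (h : ‖x‖ = ‖y‖) :
    ∫ z, f ⟪x, z⟫ ∂(sigmaMeasure d) = ∫ z, f ⟪y, z⟫ ∂(sigmaMeasure d) := by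
  set e := (Submodule.span ℝ {x - y})ᗮ.reflection with he
  have hxy : e x = y := Submodule.reflection_sub h
  have h1 := (sigma_pres d e).integral_comp e.toHomeomorph.measurableEmbedding
    (fun z => f ⟪y, z⟫)
  rw [← h1]
  congr 1
  ext z
  rw [← hxy, LinearIsometryEquiv.inner_map_map]

/-- monomial features -/
def feat (d k : ℕ) (f : Fin k → Fin (d + 1)) (x : EuclideanSpace ℝ (Fin (d + 1))) : ℝ :=
  ∏ i, x (f i)

lemma inner_pow_eq (d k : ℕ) (x y : EuclideanSpace ℝ (Fin (d + 1))) :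
    ⟪x, y⟫ ^ k = ∑ f : Fin k → Fin (d + 1), feat d k f x * feat d k f y := by
  have : ⟪x, y⟫ = ∑ i, x i * y i := by
    simp [PiLp.inner_apply, mul_comm]
  rw [this, Fintype.sum_pow]
  simp only [feat, Finset.prod_mul_distrib]

lemma feat_cont (d k : ℕ) (f : Fin k → Fin (d + 1)) : Continuous (feat d k f) := by
  unfold feat
  fun_prop

lemma feat_int (d k : ℕ) (f : Fin k → Fin (d + 1)) : Integrable (feat d k f) (sigmaMeasure d) := by
  refine Integrable.of_bound (feat_cont d k f).aestronglyMeasurable 1 ?_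
  filter_upwards [sigma_ae d] with x hx
  rw [feat, norm_prod]
  refine Finset.prod_le_one (fun _ _ => norm_nonneg _) fun i _ => ?_
  exact (PiLp.norm_apply_le x (f i)).trans hx.le

lemma mono_le (d k N : ℕ) (hN : 0 < N) (x : Fin N → EuclideanSpace ℝ (Fin (d + 1)))
    (hx : ∀ j, ‖x j‖ = 1) :
    ∫ p : EuclideanSpace ℝ (Fin (d + 1)) × EuclideanSpace ℝ (Fin (d + 1)), ⟪p.1, p.2⟫ ^ k
      ∂(sigmaMeasure d).prod (sigmaMeasure d) ≤
    (1 / (N : ℝ) ^ 2) * ∑ j, ∑ l, ⟪x j, x l⟫ ^ k := by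
  have hN' : (N : ℝ) ≠ 0 := by positivity
  set m : (Fin k → Fin (d + 1)) → ℝ := fun f => ∫ z, feat d k f z ∂(sigmaMeasure d) with hm
  have hI : ∫ p : EuclideanSpace ℝ (Fin (d + 1)) × EuclideanSpace ℝ (Fin (d + 1)), ⟪p.1, p.2⟫ ^ k
      ∂(sigmaMeasure d).prod (sigmaMeasure d) = ∑ f, m f * m f := by
    simp only [inner_pow_eq]
    rw [integral_finsetSum _ fun f _ => (feat_int d k f).mul_prod (feat_int d k f)]
    refine Finset.sum_congr rfl fun f _ => ?_
    rw [integral_prod_mul]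
  have h1 : ∀ y, ∫ z, ⟪y, z⟫ ^ k ∂(sigmaMeasure d) = ∑ f, feat d k f y * m f := by
    intro y
    simp only [inner_pow_eq]
    rw [integral_finsetSum _ fun f _ => (feat_int d k f).const_mul _]
    refine Finset.sum_congr rfl fun f _ => ?_
    rw [integral_const_mul]
  have h2 : ∀ y : EuclideanSpace ℝ (Fin (d + 1)), ‖y‖ = 1 →
      ∑ f, feat d k f y * m f = ∑ f, m f * m f := by
    intro y hy
    have e : ∫ w, ∑ f, feat d k f w * m f ∂(sigmaMeasure d) = ∑ f, m f * m f := by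
      rw [integral_finsetSum _ fun f _ => (feat_int d k f).mul_const _]
      refine Finset.sum_congr rfl fun f _ => ?_
      rw [integral_mul_const]
    rw [← e]
    have : ∀ᵐ w ∂(sigmaMeasure d), ∑ f, feat d k f w * m f = ∑ f, feat d k f y * m f := by
      filter_upwards [sigma_ae d] with w hw
      rw [← h1, ← h1]
      exact sigma_const d (fun t => t ^ k) w y (hw.trans hy.symm)
    rw [integral_congr_ae this]
    simp
  set a : (Fin k → Fin (d + 1)) → ℝ := fun f => (1 / (N : ℝ)) * ∑ j, feat d k f (x j) with ha
  have h3 : ∑ f, a f * m f = ∑ f, m f * m f := by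
    have : ∑ f, a f * m f = (1 / (N : ℝ)) * ∑ j, ∑ f, feat d k f (x j) * m f := by
      rw [Finset.sum_comm, Finset.mul_sum]
      refine Finset.sum_congr rfl fun f _ => ?_
      rw [ha, mul_assoc, Finset.sum_mul]
    rw [this, Finset.sum_congr rfl fun j _ => h2 (x j) (hx j)]
    simp only [Finset.sum_const, Finset.card_univ, Fintype.card_fin, nsmul_eq_mul]
    field_simp
  have h4 : (1 / (N : ℝ) ^ 2) * ∑ j, ∑ l, ⟪x j, x l⟫ ^ k = ∑ f, a f * a f := by
    simp only [inner_pow_eq]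
    have : ∀ f, a f * a f =
        (1 / (N : ℝ) ^ 2) * ∑ j, ∑ l, feat d k f (x j) * feat d k f (x l) := by
      intro f
      rw [← Finset.sum_mul_sum, ha]
      ring
    rw [Finset.sum_congr rfl fun f _ => this f, ← Finset.mul_sum]
    congr 1
    rw [Finset.sum_comm]
    simp_rw [Finset.sum_comm (s := (Finset.univ : Finset (Fin k → Fin (d + 1))))]
    rw [Finset.sum_comm]
  rw [hI, h4]
  have h5 : 0 ≤ ∑ f, (a f - m f) ^ 2 := Finset.sum_nonneg fun f _ => sq_nonneg _
  have h6 : ∑ f, (a f - m f) ^ 2 = ∑ f, a f * a f - 2 * ∑ f, a f * m f + ∑ f, m f * m f := by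
    rw [Finset.mul_sum, ← Finset.sum_sub_distrib, ← Finset.sum_add_distrib]
    refine Finset.sum_congr rfl fun f _ => ?_
    ring
  linarith

lemma prod_ae (d : ℕ) : ∀ᵐ p ∂(sigmaMeasure d).prod (sigmaMeasure d), ‖p.1‖ = 1 ∧ ‖p.2‖ = 1 := by
  have h1 := Measure.quasiMeasurePreserving_fst (μ := sigmaMeasure d) (ν := sigmaMeasure d)
    |>.ae (sigma_ae d)
  have h2 := Measure.quasiMeasurePreserving_snd (μ := sigmaMeasure d) (ν := sigmaMeasure d)
    |>.ae (sigma_ae d)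
  exact h1.and h2

lemma inner_bd {d : ℕ} {x y : EuclideanSpace ℝ (Fin (d + 1))} (hx : ‖x‖ = 1) (hy : ‖y‖ = 1) :
    |⟪x, y⟫| ≤ 1 := by
  have := abs_real_inner_le_norm x y
  rwa [hx, hy, mul_one] at this

lemma inner_pow_int (d k : ℕ) :
    Integrable (fun p : EuclideanSpace ℝ (Fin (d + 1)) × EuclideanSpace ℝ (Fin (d + 1)) =>
      ⟪p.1, p.2⟫ ^ k) ((sigmaMeasure d).prod (sigmaMeasure d)) := by
  refine Integrable.of_bound (by fun_prop) 1 ?_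
  filter_upwards [prod_ae d] with p hp
  rw [norm_pow]
  exact pow_le_one₀ (norm_nonneg _) (inner_bd hp.1 hp.2)

lemma poly_le (d N : ℕ) (hN : 0 < N) (x : Fin N → EuclideanSpace ℝ (Fin (d + 1)))
    (hx : ∀ j, ‖x j‖ = 1) (q : Polynomial ℝ) (hq : ∀ n, 0 ≤ q.coeff n) :
    ∫ p : EuclideanSpace ℝ (Fin (d + 1)) × EuclideanSpace ℝ (Fin (d + 1)), q.eval ⟪p.1, p.2⟫
      ∂(sigmaMeasure d).prod (sigmaMeasure d) ≤
    (1 / (N : ℝ) ^ 2) * ∑ j, ∑ l, q.eval ⟪x j, x l⟫ := by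
  simp only [Polynomial.eval_eq_sum_range]
  rw [integral_finsetSum _ fun i _ => (inner_pow_int d i).const_mul _]
  have : (1 / (N : ℝ) ^ 2) * ∑ j, ∑ l, ∑ i ∈ Finset.range (q.natDegree + 1),
      q.coeff i * ⟪x j, x l⟫ ^ i = ∑ i ∈ Finset.range (q.natDegree + 1),
      q.coeff i * ((1 / (N : ℝ) ^ 2) * ∑ j, ∑ l, ⟪x j, x l⟫ ^ i) := by
    simp_rw [Finset.sum_comm (t := Finset.range (q.natDegree + 1)), Finset.mul_sum]
    refine Finset.sum_congr rfl fun i _ => Finset.sum_congr rfl fun j _ =>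
      Finset.sum_congr rfl fun l _ => ?_
    ring
  rw [this]
  refine Finset.sum_le_sum fun i _ => ?_
  rw [integral_const_mul]
  exact mul_le_mul_of_nonneg_left (mono_le d i N hN x hx) (hq i)

/-- polynomial approximations of `1 - √(1 - t)` -/
def rpoly : ℕ → Polynomial ℝ
  | 0 => 0
  | n + 1 => Polynomial.C (1 / 2) * (Polynomial.X + rpoly n * rpoly n)

lemma rpoly_coeff (n : ℕ) : ∀ k, 0 ≤ (rpoly n).coeff k := by
  induction n with
  | zero => intro k; simp [rpoly]
  | succ n ih =>
    intro k
    rw [rpoly, Polynomial.coeff_C_mul, Polynomial.coeff_add, Polynomial.coeff_mul,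
      Polynomial.coeff_X]
    refine mul_nonneg (by norm_num) (add_nonneg (by split_ifs <;> norm_num) ?_)
    exact Finset.sum_nonneg fun p _ => mul_nonneg (ih _) (ih _)

lemma rpoly_succ (n : ℕ) (t : ℝ) :
    (rpoly (n + 1)).eval t = (t + (rpoly n).eval t ^ 2) / 2 := by
  rw [rpoly]
  simp
  ring

lemma rpoly_bd (n : ℕ) (t : ℝ) (ht : |t| ≤ 1) : |(rpoly n).eval t| ≤ 1 := by
  induction n with
  | zero => simp [rpoly]
  | succ n ih =>
    rw [rpoly_succ]
    rw [abs_le] at ht ih ⊢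
    constructor <;> nlinarith

lemma rpoly_one (n : ℕ) : 1 - (rpoly n).eval 1 ≤ 2 / (n + 2) := by
  induction n with
  | zero => simp [rpoly]
  | succ n ih =>
    have hb := abs_le.mp (rpoly_bd n 1 (by simp))
    rw [rpoly_succ]
    set r := (rpoly n).eval 1 with hr
    have hn : (0 : ℝ) ≤ n := Nat.cast_nonneg n
    have h1 : (2 : ℝ) / (n + 2) ≤ 1 := by rw [div_le_one (by positivity)]; linarith
    have h2 : 2 / ((n : ℝ) + 2) - (2 / ((n : ℝ) + 2)) ^ 2 / 2 ≤ 2 / (((n + 1 : ℕ) : ℝ) + 2) := by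
      push_cast
      rw [← sub_nonneg]
      have : 2 / ((n : ℝ) + 1 + 2) - (2 / ((n : ℝ) + 2) - (2 / ((n : ℝ) + 2)) ^ 2 / 2)
        = 2 / (((n : ℝ) + 1 + 2) * (n + 2) ^ 2) := by
        field_simp
        ring
      rw [this]
      positivity
    refine le_trans ?_ h2
    set c := 2 / ((n : ℝ) + 2)
    nlinarith

lemma rpoly_tendsto (t : ℝ) (ht : |t| ≤ 1) :
    Tendsto (fun n => (rpoly n).eval t) atTop (𝓝 (1 - √(1 - t))) := by
  have ht' := abs_le.mp ht
  rcases eq_or_lt_of_le ht'.2 with rfl | hlt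
  · simp only [sub_self, Real.sqrt_zero, sub_zero]
    have h0 : Tendsto (fun n : ℕ => 1 - 2 / ((n : ℝ) + 2)) atTop (𝓝 (1 - 0)) := by
      refine tendsto_const_nhds.sub ?_
      exact tendsto_const_nhds.div_atTop
        (tendsto_atTop_add_const_right _ _ tendsto_natCast_atTop_atTop)
    rw [sub_zero] at h0
    refine tendsto_of_tendsto_of_tendsto_of_le_of_le h0 tendsto_const_nhds (fun n => ?_)
      (fun n => ?_)
    · have := rpoly_one n
      dsimp only
      linarith
    · exact (abs_le.mp (rpoly_bd n 1 (by simp))).2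
  · set s := √(1 - t) with hs
    have hs2 : s ^ 2 = 1 - t := Real.sq_sqrt (by linarith)
    have hs0 : 0 < s := Real.sqrt_pos.mpr (by linarith)
    have hs3 : s < 3 / 2 := by nlinarith
    have habs : |1 - s| < 1 := by rw [abs_lt]; constructor <;> linarith
    set c := (1 + |1 - s|) / 2 with hc
    have hc0 : 0 ≤ c := by positivity
    have hc1 : c < 1 := by rw [hc]; linarith
    have hb : ∀ n, |(rpoly n).eval t - (1 - s)| ≤ c ^ n := by
      intro n
      induction n with
      | zero => simpa [rpoly, abs_sub_comm] using habs.le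
      | succ n ih =>
        have e : (rpoly (n + 1)).eval t - (1 - s) =
            (((rpoly n).eval t + (1 - s)) / 2) * ((rpoly n).eval t - (1 - s)) := by
          rw [rpoly_succ]
          have : t = 1 - s ^ 2 := by linarith
          nth_rw 1 [this]
          ring
        rw [e, abs_mul, pow_succ']
        refine mul_le_mul ?_ ih (abs_nonneg _) hc0
        rw [abs_div, abs_two, hc]
        have := abs_add_le ((rpoly n).eval t) (1 - s)
        have := rpoly_bd n t ht
        linarith
    rw [tendsto_iff_norm_sub_tendsto_zero]
    exact squeeze_zero (fun _ => norm_nonneg _) hb (tendsto_pow_atTop_nhds_zero_of_lt_one hc0 hc1)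

lemma dist_eq_sqrt {d : ℕ} {x y : EuclideanSpace ℝ (Fin (d + 1))} (hx : ‖x‖ = 1) (hy : ‖y‖ = 1) :
    dist x y = √2 * √(1 - ⟪x, y⟫) := by
  have h := norm_sub_sq_real x y
  rw [hx, hy] at h
  rw [← Real.sqrt_mul (by norm_num), dist_eq_norm, ← Real.sqrt_sq (norm_nonneg (x - y)), h]
  congr 1
  ring

/-- For every `d ≥ 1` and every `N`-point configuration on the unit sphere `S^d ⊂ ℝ^{d+1}`,
the normalized sum of distances never exceeds the distance integral. -/
theorem normalized_sum_of_distances_le_distance_integral (d : ℕ) (hd : 1 ≤ d) (N : ℕ)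
    (hN : 0 < N) (x : Fin N → EuclideanSpace ℝ (Fin (d + 1)))
    (hx : ∀ k, x k ∈ sphere (0 : EuclideanSpace ℝ (Fin (d + 1))) 1) :
    (1 / (N : ℝ) ^ 2) * ∑ j, ∑ k, dist (x j) (x k)
      ≤ ∫ p : EuclideanSpace ℝ (Fin (d + 1)) × EuclideanSpace ℝ (Fin (d + 1)),
          dist p.1 p.2 ∂ (sigmaMeasure d).prod (sigmaMeasure d) := by
  have hx' : ∀ k, ‖x k‖ = 1 := fun k => by simpa using hx k
  have hN' : (N : ℝ) ≠ 0 := by positivity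
  have hsq : ∫ p : EuclideanSpace ℝ (Fin (d + 1)) × EuclideanSpace ℝ (Fin (d + 1)),
        (1 - √(1 - ⟪p.1, p.2⟫)) ∂(sigmaMeasure d).prod (sigmaMeasure d) ≤
      (1 / (N : ℝ) ^ 2) * ∑ j, ∑ l, (1 - √(1 - ⟪x j, x l⟫)) := by
    refine le_of_tendsto_of_tendsto' (b := atTop) ?_ ?_
      (fun n => poly_le d N hN x hx' (rpoly n) (rpoly_coeff n))
    · refine tendsto_integral_of_dominated_convergence (fun _ => 1) (fun n => ?_)
        (integrable_const _) (fun n => ?_) ?_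
      · exact ((rpoly n).continuous.comp
          (continuous_fst.inner continuous_snd)).aestronglyMeasurable
      · filter_upwards [prod_ae d] with p hp
        exact rpoly_bd n _ (inner_bd hp.1 hp.2)
      · filter_upwards [prod_ae d] with p hp
        exact rpoly_tendsto _ (inner_bd hp.1 hp.2)
    · refine Tendsto.const_mul _ (tendsto_finset_sum _ fun j _ => tendsto_finset_sum _ fun l _ => ?_)
      exact rpoly_tendsto _ (inner_bd (hx' j) (hx' l))
  have hint : Integrable (fun p : EuclideanSpace ℝ (Fin (d + 1)) × EuclideanSpace ℝ (Fin (d + 1)) =>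
      √(1 - ⟪p.1, p.2⟫)) ((sigmaMeasure d).prod (sigmaMeasure d)) := by
    refine Integrable.of_bound (Continuous.aestronglyMeasurable (by fun_prop)) (√2) ?_
    filter_upwards [prod_ae d] with p hp
    rw [Real.norm_eq_abs, abs_of_nonneg (Real.sqrt_nonneg _)]
    have := abs_le.mp (inner_bd hp.1 hp.2)
    exact Real.sqrt_le_sqrt (by linarith)
  rw [integral_sub (integrable_const _) hint] at hsq
  have hR : ∫ p : EuclideanSpace ℝ (Fin (d + 1)) × EuclideanSpace ℝ (Fin (d + 1)),
      dist p.1 p.2 ∂(sigmaMeasure d).prod (sigmaMeasure d) =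
      √2 * ∫ p : EuclideanSpace ℝ (Fin (d + 1)) × EuclideanSpace ℝ (Fin (d + 1)),
        √(1 - ⟪p.1, p.2⟫) ∂(sigmaMeasure d).prod (sigmaMeasure d) := by
    rw [← integral_const_mul]
    refine integral_congr_ae ?_
    filter_upwards [prod_ae d] with p hp
    exact dist_eq_sqrt hp.1 hp.2
  have hLs : (1 / (N : ℝ) ^ 2) * ∑ j, ∑ k, dist (x j) (x k) =
      √2 * ((1 / (N : ℝ) ^ 2) * ∑ j, ∑ l, √(1 - ⟪x j, x l⟫)) := by
    simp_rw [dist_eq_sqrt (hx' _) (hx' _), ← Finset.mul_sum]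
    ring
  rw [hR, hLs]
  refine mul_le_mul_of_nonneg_left ?_ (Real.sqrt_nonneg _)
  simp only [Finset.sum_sub_distrib, Finset.sum_const, Finset.card_univ, Fintype.card_fin,
    nsmul_eq_mul, mul_one, integral_const, probReal_univ, smul_eq_mul, mul_sub] at hsq
  have : 1 / (N : ℝ) ^ 2 * (N * N) = 1 := by field_simp
  linarith
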